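/- For every natural number m, there exists a natural number i such that G_i m = 0; that is, every Ackermannian Goodstein sequence terminates. -/

import Mathlib

/-- The base-`k` Ackermann function `A_a(k, b)`:
`A_0(k, b) = k ^ b` and `A_{a+1}(k, b) = A_a^k(k, A_{a+1}(k, b-1))`,
with the auxiliary value `A_{a+1}(k, -1) = 1`
(equivalently, `A_{a+1}(k, b) = (A_a^k)^[b+1] (1)`). -/
def Ack (k : ℕ) : ℕ → ℕ → ℕ
  | 0, b => k ^ b
  | a + 1, b => ((Ack k a)^[k])^[b + 1] 1

/-- `IsSandwich k m n a b ms` says that `(A_{a i}(k, b i))_{i=1}^n` is a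
`k`-sandwiching sequence for `m`, with sandwiching values `(ms i)_{i=0}^n`:
`ms 0 = 0`; for each `i < n`, `A_{a (i+1)} (ms i) ≤ m < A_{a (i+1) + 1} (ms i)`,
`A_{a (i+1)} (b (i+1)) ≤ m < A_{a (i+1)} (b (i+1) + 1)`, and
`ms (i+1) = A_{a (i+1)} (b (i+1))`; and `A_0 (ms n) > m`. -/
structure IsSandwich (k m n : ℕ) (a b ms : ℕ → ℕ) : Prop where
  ms_zero : ms 0 = 0
  idx_lo : ∀ i < n, Ack k (a (i + 1)) (ms i) ≤ m
  idx_hi : ∀ i < n, m < Ack k (a (i + 1) + 1) (ms i)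
  arg_lo : ∀ i < n, Ack k (a (i + 1)) (b (i + 1)) ≤ m
  arg_hi : ∀ i < n, m < Ack k (a (i + 1)) (b (i + 1) + 1)
  ms_succ : ∀ i < n, ms (i + 1) = Ack k (a (i + 1)) (b (i + 1))
  halt : m < Ack k 0 (ms n)

/-- `NF k m a b c` says that `m ≡_k A_a b + c`, i.e. `m` has `k`-normal form
`A_a b + c` (so `m = A_a b + c` and the `k`-sandwiching sequence of `m` ends
with the pair `(a, b)`). -/
def NF (k m a b c : ℕ) : Prop :=
  m = Ack k a b + c ∧
    ∃ n as bs ms, 1 ≤ n ∧ IsSandwich k m n as bs ms ∧ a = as n ∧ b = bs n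

/-- `BCH k l m v` is the graph of the base-change operation `⟨k→l⟩`:
`⟨k→l⟩0 = 0` and, for `m ≡_k A_a(k, b) + c`,
`⟨k→l⟩m = A_{⟨k→l⟩a}(l, ⟨k→l⟩b) + ⟨k→l⟩c`. -/
inductive BCH (k l : ℕ) : ℕ → ℕ → Prop
  | zero : BCH k l 0 0
  | step (m a b c a' b' c' : ℕ) : NF k m a b c →
      BCH k l a a' → BCH k l b b' → BCH k l c c' →
      BCH k l m (Ack l a' b' + c')


/-- `AckGoodstein m i v` says that the `i`-th term `G_i m` of the Ackermannian
Goodstein sequence starting at `m` is defined and equals `v`: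
`G_0 m = m` and, whenever `G_i m > 0`, `G_{i+1} m = ⟨(i+2)→(i+3)⟩(G_i m) - 1`. -/
inductive AckGoodstein (m : ℕ) : ℕ → ℕ → Prop
  | zero : AckGoodstein m 0 m
  | step (i v w : ℕ) : AckGoodstein m i v → 0 < v →
      BCH (i + 2) (i + 3) v w → AckGoodstein m (i + 1) (w - 1)

theorem it_infl {f : ℕ → ℕ} (hi : ∀ x, x < f x) (n x : ℕ) : x + n ≤ f^[n] x := by
  induction n with
  | zero => simp
  | succ n ih =>
    rw [Function.iterate_succ_apply']
    have := hi (f^[n] x)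
    omega

theorem it_lt {f : ℕ → ℕ} (hi : ∀ x, x < f x) {m n : ℕ} (h : m < n) (x : ℕ) :
    f^[m] x < f^[n] x := by
  obtain ⟨d, rfl⟩ := Nat.exists_eq_add_of_lt h
  have e : m + d + 1 = (d + 1) + m := by omega
  rw [e, Function.iterate_add_apply]
  have := it_infl hi (d + 1) (f^[m] x)
  omega

theorem it_le {f : ℕ → ℕ} (hi : ∀ x, x < f x) {m n : ℕ} (h : m ≤ n) (x : ℕ) :
    f^[m] x ≤ f^[n] x := by
  rcases h.eq_or_lt with rfl | h
  · exact le_rfl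
  · exact (it_lt hi h x).le

theorem it_mono2 {f g : ℕ → ℕ} (hg : Monotone g) (hfg : ∀ x, f x ≤ g x) (n : ℕ) {x y : ℕ}
    (hxy : x ≤ y) : f^[n] x ≤ g^[n] y := by
  induction n with
  | zero => simpa
  | succ n ih =>
    rw [Function.iterate_succ_apply', Function.iterate_succ_apply']
    exact (hfg _).trans (hg ih)

theorem akk_zero (k b : ℕ) : Ack k 0 b = k ^ b := by simp [Ack]

theorem akk_it (k a b : ℕ) : Ack k (a + 1) b = (Ack k a)^[k * (b + 1)] 1 := by
  rw [Function.iterate_mul]; simp [Ack]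

theorem akk_step (k a b n : ℕ) :
    Ack k (a + 1) (b + n) = (Ack k a)^[k * n] (Ack k (a + 1) b) := by
  rw [akk_it, akk_it, ← Function.iterate_add_apply]
  congr 2; ring

theorem akk_basic {k : ℕ} (hk : 2 ≤ k) (a : ℕ) : StrictMono (Ack k a) ∧ ∀ x, x < Ack k a x := by
  induction a with
  | zero =>
    refine ⟨fun x y h => ?_, fun x => ?_⟩
    · rw [akk_zero, akk_zero]; exact Nat.pow_lt_pow_right (by omega) h
    · rw [akk_zero]; exact Nat.lt_pow_self (by omega)
  | succ a ih =>
    refine ⟨fun x y h => ?_, fun x => ?_⟩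
    · rw [akk_it, akk_it]
      exact it_lt ih.2 (Nat.mul_lt_mul_of_pos_left (by omega) (by omega)) 1
    · rw [akk_it]
      have := it_infl ih.2 (k * (x + 1)) 1
      nlinarith

theorem akk_sm {k : ℕ} (hk : 2 ≤ k) (a : ℕ) : StrictMono (Ack k a) := (akk_basic hk a).1
theorem akk_lt {k : ℕ} (hk : 2 ≤ k) (a x : ℕ) : x < Ack k a x := (akk_basic hk a).2 x

theorem akk_succ_lt {k : ℕ} (hk : 2 ≤ k) (a x : ℕ) : Ack k a x < Ack k (a + 1) x := by
  rw [akk_it]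
  obtain ⟨n, hn⟩ : ∃ n, k * (x + 1) = n + 1 := ⟨k * (x + 1) - 1, by
    have : 0 < k * (x + 1) := by positivity
    omega⟩
  rw [hn, Function.iterate_succ_apply']
  apply akk_sm hk
  have := it_infl (akk_basic hk a).2 n 1
  nlinarith

theorem akk_idx_lt {k : ℕ} (hk : 2 ≤ k) {a d : ℕ} (h : a < d) (x : ℕ) : Ack k a x < Ack k d x :=
  strictMono_nat_of_lt_succ (f := fun a => Ack k a x) (fun a => akk_succ_lt hk a x) h

theorem akk_idx_le {k : ℕ} (hk : 2 ≤ k) {a d : ℕ} (h : a ≤ d) (x : ℕ) : Ack k a x ≤ Ack k d x :=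
  (strictMono_nat_of_lt_succ (f := fun a => Ack k a x)
    (fun a => akk_succ_lt hk a x)).monotone h

theorem akk_le {k : ℕ} (hk : 2 ≤ k) {a d x y : ℕ} (h : a ≤ d) (hx : x ≤ y) :
    Ack k a x ≤ Ack k d y :=
  (akk_idx_le hk h x).trans ((akk_sm hk d).monotone hx)

theorem akk_gt_idx {k : ℕ} (hk : 2 ≤ k) (a x : ℕ) : a < Ack k a x := by
  induction a with
  | zero => exact (Nat.zero_le x).trans_lt (akk_lt hk 0 x)
  | succ a ih => have := akk_succ_lt hk a x; omega

theorem akk_base_le {k l : ℕ} (hk : 2 ≤ k) (hl : k ≤ l) (a x : ℕ) : Ack k a x ≤ Ack l a x := by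
  induction a generalizing x with
  | zero => rw [akk_zero, akk_zero]; exact Nat.pow_le_pow_left hl x
  | succ a ih =>
    rw [akk_it, akk_it]
    refine (it_mono2 (akk_sm (hk.trans hl) a).monotone ih _ le_rfl).trans ?_
    exact it_le (akk_basic (hk.trans hl) a).2 (Nat.mul_le_mul_right _ hl) 1

theorem two_mul_le_akk {k : ℕ} (hk : 2 ≤ k) (a x : ℕ) : 2 * x ≤ Ack k a x := by
  refine le_trans ?_ (akk_idx_le hk (Nat.zero_le a) x)
  rw [akk_zero]
  refine le_trans ?_ (Nat.pow_le_pow_left hk x)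
  cases x with
  | zero => simp
  | succ x => rw [pow_succ]; have := Nat.lt_two_pow_self (n := x); omega

theorem akk_double {k : ℕ} (hk : 2 ≤ k) (a x : ℕ) :
    2 * Ack k (a + 1) x ≤ Ack (k + 1) (a + 1) x := by
  have hl : 2 ≤ k + 1 := by omega
  have h1 : Ack k (a + 1) x ≤ (Ack (k + 1) a)^[k * (x + 1)] 1 := by
    rw [akk_it]
    exact it_mono2 (akk_sm hl a).monotone (akk_base_le hk (by omega) a) _ le_rfl
  rw [akk_it (k + 1)]
  refine le_trans ?_ (it_le (akk_basic hl a).2 (show k * (x + 1) + 1 ≤ (k + 1) * (x + 1) by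
    nlinarith) 1)
  rw [Function.iterate_succ_apply']
  have := two_mul_le_akk hl a ((Ack (k + 1) a)^[k * (x + 1)] 1)
  omega

theorem akk_range {k : ℕ} (hk : 2 ≤ k) {a d : ℕ} (h : a ≤ d) (e : ℕ) :
    ∃ x, Ack k d e = Ack k a x := by
  induction d, h using Nat.le_induction generalizing e with
  | base => exact ⟨e, rfl⟩
  | succ d hd ih =>
    rw [akk_it]
    obtain ⟨n, hn⟩ : ∃ n, k * (e + 1) = n + 1 := ⟨k * (e + 1) - 1, by
      have : 0 < k * (e + 1) := by positivity
      omega⟩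
    rw [hn, Function.iterate_succ_apply']
    exact ih _

/-- successor gap -/
theorem akk_gap {k : ℕ} (hk : 2 ≤ k) {a d b e m : ℕ} (h : a ≤ d) (hlt : Ack k a b < Ack k d e)
    (hm : m < Ack k a (b + 1)) : m < Ack k d e := by
  obtain ⟨x, hx⟩ := akk_range hk h e
  rw [hx] at hlt ⊢
  have := (akk_sm hk a).lt_iff_lt.1 hlt
  exact hm.trans_le ((akk_sm hk a).monotone this)

theorem akk_comp_le {k : ℕ} (hk : 2 ≤ k) {a d : ℕ} (h : a < d) (e : ℕ) :
    Ack k a (Ack k d e) ≤ Ack k d (e + 1) := by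
  obtain ⟨d, rfl⟩ : ∃ d', d = d' + 1 := ⟨d - 1, by omega⟩
  rw [akk_step]
  refine le_trans ?_ (it_le (akk_basic hk d).2 (show 1 ≤ k * 1 by omega) _)
  exact akk_idx_le hk (by omega) _

inductive W (k m : ℕ) : ℕ → ℕ → Prop
  | base (a b : ℕ) : m < Ack k (a + 1) 0 → Ack k a b ≤ m → m < Ack k a (b + 1) → W k m a b
  | next (d e a b : ℕ) : W k m d e → Ack k a (Ack k d e) ≤ m → m < Ack k (a + 1) (Ack k d e) →
      Ack k a b ≤ m → m < Ack k a (b + 1) → W k m a b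

theorem W.lo {k m a b : ℕ} (h : W k m a b) : Ack k a b ≤ m := by cases h <;> assumption
theorem W.hi {k m a b : ℕ} (h : W k m a b) : m < Ack k a (b + 1) := by cases h <;> assumption

theorem akk_le_arg {k : ℕ} (hk : 2 ≤ k) {a b x m : ℕ} (h1 : Ack k a x ≤ m)
    (h2 : m < Ack k a (b + 1)) : x ≤ b :=
  Nat.lt_succ_iff.1 ((akk_sm hk a).lt_iff_lt.1 (h1.trans_lt h2))

theorem W.idx {k m d e a : ℕ} (hk : 2 ≤ k) (h : W k m d e) (h1 : Ack k a (Ack k d e) ≤ m) :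
    a < d := by
  by_contra hc
  have h2 := h.hi
  have h3 : Ack k d (e + 1) ≤ Ack k a (Ack k d e) := akk_le hk (by omega) (akk_lt hk d e)
  omega

theorem W.down {k m n a b : ℕ} (hk : 2 ≤ k) (h : W k m a b) (hn : Ack k a b ≤ n) (hm : n ≤ m) :
    W k n a b := by
  induction h with
  | base a b h1 h2 h3 => exact .base a b (by omega) hn (by omega)
  | next d e a b h0 h1 h2 h3 h4 ih =>
    have hb := akk_le_arg hk h1 h4
    have hb2 := (akk_sm hk a).monotone hb
    have := akk_lt hk a b
    exact .next d e a b (ih (by omega)) (by omega) (by omega) hn (by omega)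

theorem W.up {k m n a b : ℕ} (hk : 2 ≤ k) (h : W k n a b) (hm : n ≤ m)
    (hn : m < Ack k a (b + 1)) : W k m a b := by
  induction h with
  | base a b h1 h2 h3 => exact .base a b (akk_gap hk (by omega) (by omega) hn) (by omega) hn
  | next d e a b h0 h1 h2 h3 h4 ih =>
    have had := h0.idx hk h1
    exact .next d e a b (ih (akk_gap hk had.le (h3.trans_lt h0.hi) hn)) (by omega)
      (akk_gap hk (by omega) (by omega) hn) (by omega) hn

theorem W.move {k m n a b : ℕ} (hk : 2 ≤ k) (h : W k n a b) (h1 : Ack k a b ≤ m)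
    (h2 : m < Ack k a (b + 1)) : W k m a b := by
  rcases le_total n m with hh | hh
  · exact h.up hk hh h2
  · exact h.down hk h1 hh

theorem W.chain_aux {k : ℕ} (hk : 2 ≤ k) (M : ℕ) : ∀ t a1 b1 a b m, M - a1 = t → m ≤ M →
    W k m a1 b1 → W k (Ack k a b) a b → Ack k a b ≤ m → a1 < a → Ack k a b ≤ b1 := by
  intro t
  induction t using Nat.strong_induction_on with
  | _ t ih =>
  intro a1 b1 a b m ht hmM h1 h hpm haa
  have haM : a < M := (akk_gt_idx hk a b).trans_le (hpm.trans hmM)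
  cases h1 with
  | base _ _ g1 g2 g3 =>
    exfalso
    have : Ack k (a1 + 1) 0 ≤ Ack k a b := akk_le hk haa (Nat.zero_le _)
    omega
  | next d e _ _ g0 g1 g2 g3 g4 =>
    have had := g0.idx hk g1
    have hqb := akk_le_arg hk g1 g4
    rcases lt_trichotomy d a with hda | hda | hda
    · have := ih (M - d) (by omega) d e a b m rfl hmM g0 h hpm hda
      have := akk_lt hk d e
      omega
    · subst hda
      have : b ≤ e := akk_le_arg hk hpm g0.hi
      have := (akk_sm hk d).monotone this
      omega
    · by_contra hc
      have hq : Ack k d e ≤ Ack k a b := by omega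
      have g0p := g0.down hk hq hpm
      have := ih (M - a) (by omega) a b d e (Ack k a b) rfl (by omega) h
        (g0.down hk le_rfl g0.lo) hq hda
      have h5 : Ack k (a1 + 1) (Ack k d e) ≤ Ack k a b := akk_le hk haa this
      omega

theorem W.chain {k a1 b1 a b m : ℕ} (hk : 2 ≤ k) (h1 : W k m a1 b1) (h : W k (Ack k a b) a b)
    (hm : Ack k a b ≤ m) (ha : a1 < a) : Ack k a b ≤ b1 :=
  W.chain_aux hk m _ a1 b1 a b m rfl le_rfl h1 h hm ha

/-- leading pair -/
def LP (k m a b : ℕ) : Prop := W k m a b ∧ m < k ^ Ack k a b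

theorem LP.uniq_aux {k m a b a2 b2 : ℕ} (hk : 2 ≤ k) (h : LP k m a b) (h2 : LP k m a2 b2) :
    a ≤ a2 := by
  by_contra hc
  have h3 := W.chain hk h2.1 (h.1.down hk le_rfl h.1.lo) h.1.lo (by omega)
  have h4 := akk_le hk (Nat.zero_le a2) h3
  rw [akk_zero] at h4
  have := h.2
  have := h2.1.lo
  omega

theorem LP.uniq {k m a b a2 b2 : ℕ} (hk : 2 ≤ k) (h : LP k m a b) (h2 : LP k m a2 b2) :
    a = a2 ∧ b = b2 := by
  have h3 : a = a2 := le_antisymm (h.uniq_aux hk h2) (h2.uniq_aux hk h)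
  subst h3
  exact ⟨rfl, le_antisymm (akk_le_arg hk h.1.lo h2.1.hi) (akk_le_arg hk h2.1.lo h.1.hi)⟩

theorem LP.lead {k m a b : ℕ} (hk : 2 ≤ k) (h : W k m a b) : LP k (Ack k a b) a b :=
  ⟨h.down hk le_rfl h.lo, Nat.lt_pow_self (by omega)⟩

theorem LP.move {k m n a b : ℕ} (hk : 2 ≤ k) (h : LP k n a b) (h1 : Ack k a b ≤ m)
    (h2 : m ≤ n) : LP k m a b :=
  ⟨h.1.down hk h1 h2, h2.trans_lt h.2⟩

theorem find_idx {k : ℕ} (hk : 2 ≤ k) {m s : ℕ} (h : Ack k 0 s ≤ m) :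
    ∃ a b, Ack k a s ≤ m ∧ m < Ack k (a + 1) s ∧ Ack k a b ≤ m ∧ m < Ack k a (b + 1) := by
  have h1 : ∃ a, m < Ack k a s := ⟨m, akk_gt_idx hk m s⟩
  classical
  obtain ⟨a, ha⟩ : ∃ a, Nat.find h1 = a + 1 := by
    refine ⟨Nat.find h1 - 1, ?_⟩
    have : Nat.find h1 ≠ 0 := fun h0 => by
      have := Nat.find_spec h1
      rw [h0] at this; omega
    omega
  have ha1 : m < Ack k (a + 1) s := ha ▸ Nat.find_spec h1
  have ha2 : Ack k a s ≤ m := not_lt.1 (Nat.find_min h1 (m := a) (by omega))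
  have h2 : ∃ b, m < Ack k a b := ⟨m, akk_lt hk a m⟩
  obtain ⟨b, hb⟩ : ∃ b, Nat.find h2 = b + 1 := by
    refine ⟨Nat.find h2 - 1, ?_⟩
    have : Nat.find h2 ≠ 0 := fun h0 => by
      have h3 := Nat.find_spec h2
      rw [h0] at h3
      have := (akk_sm hk a).monotone (Nat.zero_le s)
      omega
    omega
  exact ⟨a, b, ha2, ha1, not_lt.1 (Nat.find_min h2 (m := b) (by omega)), hb ▸ Nat.find_spec h2⟩

theorem LP.ex_aux {k : ℕ} (hk : 2 ≤ k) (m : ℕ) : ∀ t d e, m - Ack k d e = t → W k m d e →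
    ∃ a b, LP k m a b := by
  intro t
  induction t using Nat.strong_induction_on with
  | _ t ih =>
  intro d e ht h
  by_cases hc : m < k ^ Ack k d e
  · exact ⟨d, e, h, hc⟩
  · obtain ⟨a, b, h1, h2, h3, h4⟩ := find_idx hk (m := m) (s := Ack k d e)
      (by rw [akk_zero]; omega)
    have := akk_le_arg hk h1 h4
    have := akk_lt hk a b
    exact ih (m - Ack k a b) (by omega) a b rfl (.next d e a b h h1 h2 h3 h4)

theorem LP.ex {k : ℕ} (hk : 2 ≤ k) {m : ℕ} (hm : 0 < m) : ∃ a b, LP k m a b := by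
  obtain ⟨a, b, h1, h2, h3, h4⟩ := find_idx hk (m := m) (s := 0) (by rw [akk_zero]; simp; omega)
  exact LP.ex_aux hk m _ a b rfl (.base a b h2 h3 h4)

theorem W.sandwich {k m a b : ℕ} (hk : 2 ≤ k) (h : W k m a b) : ∃ (n : ℕ) (as bs ms : ℕ → ℕ),
    1 ≤ n ∧ ms 0 = 0 ∧ (∀ i < n, Ack k (as (i + 1)) (ms i) ≤ m ∧
      m < Ack k (as (i + 1) + 1) (ms i) ∧ Ack k (as (i + 1)) (bs (i + 1)) ≤ m ∧
      m < Ack k (as (i + 1)) (bs (i + 1) + 1) ∧ ms (i + 1) = Ack k (as (i + 1)) (bs (i + 1))) ∧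
    a = as n ∧ b = bs n := by
  induction h with
  | base a b h1 h2 h3 =>
    have hk0 : Ack k a 0 ≤ m := ((akk_sm hk a).monotone (Nat.zero_le b)).trans h2
    refine ⟨1, fun _ => a, fun _ => b, fun i => if i = 0 then 0 else Ack k a b, le_rfl,
      by simp, ?_, rfl, rfl⟩
    intro i hi
    obtain rfl : i = 0 := by omega
    simp [*]
  | next d e a b h0 h1 h2 h3 h4 ih =>
    obtain ⟨n, as, bs, ms, hn, hz, hs, rfl, rfl⟩ := ih
    refine ⟨n + 1, fun i => if i = n + 1 then a else as i, fun i => if i = n + 1 then b else bs i,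
      fun i => if i = n + 1 then Ack k a b else ms i, by omega, by simp [hz], ?_, by simp, by simp⟩
    intro i hi
    rcases Nat.lt_succ_iff_lt_or_eq.1 hi with hi | rfl
    · have e1 : i + 1 ≠ n + 1 := by omega
      have e2 : i ≠ n + 1 := by omega
      simp only [e1, e2, if_false]
      exact hs i hi
    · have hms : ms i = Ack k (as i) (bs i) := by
        obtain ⟨j, rfl⟩ : ∃ j, i = j + 1 := ⟨i - 1, by omega⟩
        exact (hs j (by omega)).2.2.2.2
      have e2 : i ≠ i + 1 := by omega
      simp only [e2, if_false, if_true, hms]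
      exact ⟨h1, h2, h3, h4, trivial⟩

theorem LP.nf {k m a b : ℕ} (hk : 2 ≤ k) (h : LP k m a b) : NF k m a b (m - Ack k a b) := by
  obtain ⟨n, as, bs, ms, hn, hz, hs, e1, e2⟩ := h.1.sandwich hk
  refine ⟨by have := h.1.lo; omega, n, as, bs, ms, hn, ?_, e1, e2⟩
  refine ⟨hz, fun i hi => (hs i hi).1, fun i hi => (hs i hi).2.1, fun i hi => (hs i hi).2.2.1,
    fun i hi => (hs i hi).2.2.2.1, fun i hi => (hs i hi).2.2.2.2, ?_⟩
  obtain ⟨j, rfl⟩ : ∃ j, n = j + 1 := ⟨n - 1, by omega⟩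
  rw [(hs j (by omega)).2.2.2.2, ← e1, ← e2, akk_zero]
  exact h.2

theorem LP.a_lt {k m a b : ℕ} (hk : 2 ≤ k) (h : LP k m a b) : a < m :=
  (akk_gt_idx hk a b).trans_le h.1.lo
theorem LP.b_lt {k m a b : ℕ} (hk : 2 ≤ k) (h : LP k m a b) : b < m :=
  (akk_lt hk a b).trans_le h.1.lo
theorem LP.c_lt {k m a b : ℕ} (hk : 2 ≤ k) (h : LP k m a b) : m - Ack k a b < m := by
  have := h.1.lo
  have := akk_lt hk a b
  omega

noncomputable def la (k m : ℕ) : ℕ :=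
  open Classical in if h : 2 ≤ k ∧ 0 < m then (LP.ex h.1 h.2).choose else 0
noncomputable def lb (k m : ℕ) : ℕ :=
  open Classical in if h : 2 ≤ k ∧ 0 < m then (LP.ex h.1 h.2).choose_spec.choose else 0

theorem LP.spec {k m : ℕ} (hk : 2 ≤ k) (hm : 0 < m) : LP k m (la k m) (lb k m) := by
  have h : 2 ≤ k ∧ 0 < m := ⟨hk, hm⟩
  simp only [la, lb, h, dif_pos, and_self]
  exact (LP.ex h.1 h.2).choose_spec.choose_spec

noncomputable def oo (k : ℕ) (m : ℕ) : Ordinal.{0} :=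
  if h : 2 ≤ k ∧ 0 < m then
    Ordinal.veblen (oo k (la k m)) (oo k (lb k m) + 1) + oo k (m - Ack k (la k m) (lb k m))
  else 0
termination_by m
decreasing_by
  · exact (LP.spec h.1 h.2).a_lt h.1
  · exact (LP.spec h.1 h.2).b_lt h.1
  · exact (LP.spec h.1 h.2).c_lt h.1

noncomputable def ff (k : ℕ) (m : ℕ) : ℕ :=
  if h : 2 ≤ k ∧ 0 < m then
    Ack (k + 1) (ff k (la k m)) (ff k (lb k m)) + ff k (m - Ack k (la k m) (lb k m))
  else 0
termination_by m
decreasing_by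
  · exact (LP.spec h.1 h.2).a_lt h.1
  · exact (LP.spec h.1 h.2).b_lt h.1
  · exact (LP.spec h.1 h.2).c_lt h.1

theorem oo_zero (k : ℕ) : oo k 0 = 0 := by rw [oo]; simp
theorem ff_zero (k : ℕ) : ff k 0 = 0 := by rw [ff]; simp

theorem LP.pos {k m a b : ℕ} (hk : 2 ≤ k) (h : LP k m a b) : 0 < m :=
  (Nat.zero_le _).trans_lt (h.b_lt hk)

theorem oo_eq {k m a b : ℕ} (hk : 2 ≤ k) (h : LP k m a b) :
    oo k m = Ordinal.veblen (oo k a) (oo k b + 1) + oo k (m - Ack k a b) := by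
  have hm := h.pos hk
  obtain ⟨rfl, rfl⟩ := h.uniq hk (LP.spec hk hm)
  rw [oo]; simp [hk, hm]

theorem ff_eq {k m a b : ℕ} (hk : 2 ≤ k) (h : LP k m a b) :
    ff k m = Ack (k + 1) (ff k a) (ff k b) + ff k (m - Ack k a b) := by
  have hm := h.pos hk
  obtain ⟨rfl, rfl⟩ := h.uniq hk (LP.spec hk hm)
  rw [ff]; simp [hk, hm]

theorem oo_lead {k a b : ℕ} (hk : 2 ≤ k) (h : LP k (Ack k a b) a b) :
    oo k (Ack k a b) = Ordinal.veblen (oo k a) (oo k b + 1) := by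
  rw [oo_eq hk h]; simp [oo_zero]

theorem ff_lead {k a b : ℕ} (hk : 2 ≤ k) (h : LP k (Ack k a b) a b) :
    ff k (Ack k a b) = Ack (k + 1) (ff k a) (ff k b) := by
  rw [ff_eq hk h]; simp [ff_zero]

theorem ff_bch {k : ℕ} (hk : 2 ≤ k) (m : ℕ) : BCH k (k + 1) m (ff k m) := by
  induction m using Nat.strong_induction_on with
  | _ m ih =>
  rcases Nat.eq_zero_or_pos m with rfl | hm
  · rw [ff_zero]; exact .zero
  · have h := LP.spec hk hm
    rw [ff_eq hk h]
    exact .step m _ _ _ _ _ _ (h.nf hk) (ih _ (h.a_lt hk)) (ih _ (h.b_lt hk)) (ih _ (h.c_lt hk))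

theorem ff_ge {k : ℕ} (hk : 2 ≤ k) (m : ℕ) : m ≤ ff k m := by
  induction m using Nat.strong_induction_on with
  | _ m ih =>
  rcases Nat.eq_zero_or_pos m with rfl | hm
  · simp
  · have h := LP.spec hk hm
    rw [ff_eq hk h]
    have h1 := ih _ (h.c_lt hk)
    have h2 := akk_le (k := k + 1) (by omega) (ih _ (h.a_lt hk)) (ih _ (h.b_lt hk))
    have h3 := akk_base_le hk (Nat.le_succ k) (la k m) (lb k m)
    have := h.1.lo
    simp only [Nat.succ_eq_add_one] at h3
    omega

/-! ordinals -/
theorem veb_prin {α β x y : Ordinal.{0}} (hx : x < Ordinal.veblen α β)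
    (hy : y < Ordinal.veblen α β) : x + y < Ordinal.veblen α β := by
  obtain ⟨g, hg⟩ := Ordinal.veblen_mem_range_opow α β
  simp only at hg
  rw [← hg] at hx hy ⊢
  exact Ordinal.isPrincipal_add_omega0_opow g hx hy

theorem veb_one {α β : Ordinal.{0}} : 1 < Ordinal.veblen α (β + 1) := by
  have h : Ordinal.veblen 0 0 < Ordinal.veblen 0 (β + 1) := by
    rw [Ordinal.veblen_lt_veblen_iff_right]; simp
  have h2 : Ordinal.veblen 0 (β + 1) ≤ Ordinal.veblen α (β + 1) :=
    Ordinal.veblen_left_monotone (β + 1) (zero_le)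
  have h3 : Ordinal.veblen.{0} 0 0 = 1 := by rw [Ordinal.veblen_zero_apply]; simp
  rw [h3] at h
  exact h.trans_le h2

theorem veb_self (α β : Ordinal.{0}) : β < Ordinal.veblen α (β + 1) :=
  lt_of_lt_of_le (Order.lt_succ β) (Ordinal.right_le_veblen α (β + 1))

theorem veb_idx {α β α1 β1 : Ordinal.{0}} (h : α < α1) (hb : β < Ordinal.veblen α1 (β1 + 1)) :
    Ordinal.veblen α (β + 1) < Ordinal.veblen α1 (β1 + 1) := by
  rw [← Ordinal.veblen_veblen_of_lt h (β1 + 1), Ordinal.veblen_lt_veblen_iff_right]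
  exact veb_prin hb veb_one

theorem oo_mono {k : ℕ} (hk : 2 ≤ k) : StrictMono (oo k) := by
  suffices H : ∀ n m, m < n → oo k m < oo k n from fun m n h => H n m h
  intro n
  induction n using Nat.strong_induction_on with
  | _ n ihn =>
  intro m
  induction m using Nat.strong_induction_on with
  | _ m ihm =>
  intro hmn
  have hn : 0 < n := by omega
  obtain ⟨a1, b1, h1⟩ := LP.ex hk hn
  rcases Nat.eq_zero_or_pos m with rfl | hm
  · rw [oo_zero, oo_eq hk h1]
    exact lt_of_lt_of_le Ordinal.veblen_pos le_self_add
  obtain ⟨a, b, h⟩ := LP.ex hk hm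
  have hlo := h.1.lo
  have hlo1 := h1.1.lo
  by_cases hp : Ack k a1 b1 ≤ m
  · obtain ⟨rfl, rfl⟩ := h.uniq hk (h1.move hk hp hmn.le)
    rw [oo_eq hk h, oo_eq hk h1]
    have := ihn (n - Ack k a b) (h1.c_lt hk) (m - Ack k a b) (by omega)
    gcongr
  have hl1 := LP.lead hk h1.1
  rcases hlo1.lt_or_eq with hlt | rfl
  · refine (ihn _ hlt m (by omega)).trans_le ?_
    rw [oo_lead hk hl1, oo_eq hk h1]
    exact le_self_add
  rw [oo_lead hk hl1]
  rcases hlo.lt_or_eq with hlt | rfl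
  · rw [oo_eq hk h]
    have e1 := ihm _ hlt (by omega)
    have e2 := ihm _ (h.c_lt hk) (by have := h.c_lt hk; omega)
    rw [oo_lead hk hl1] at e1 e2
    rw [oo_lead hk (LP.lead hk h.1)] at e1
    exact veb_prin e1 e2
  · rcases lt_trichotomy a a1 with haa | rfl | haa
    · rw [oo_lead hk h]
      apply veb_idx (ihn _ (h1.a_lt hk) _ haa)
      rw [← oo_lead hk hl1]
      exact ihm _ (h.b_lt hk) (by have := h.b_lt hk; omega)
    · rw [oo_lead hk h, Ordinal.veblen_lt_veblen_iff_right]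
      have := ihn _ (h1.b_lt hk) _ ((akk_sm hk a).lt_iff_lt.1 hmn)
      simpa using this
    · have hb := W.chain hk h1.1 h.1 hmn.le haa
      refine lt_of_le_of_lt ?_ (veb_self _ _)
      rcases hb.lt_or_eq with hb | hb
      · exact (ihn _ (h1.b_lt hk) _ hb).le
      · rw [hb]

/-- good: base change preserves the normal form and the ordinal -/
def Good (k n : ℕ) : Prop :=
  (∀ a b, LP k n a b → LP (k + 1) (ff k n) (ff k a) (ff k b)) ∧ oo (k + 1) (ff k n) = oo k n

theorem Good.lt {k x y : ℕ} (hk : 2 ≤ k) (hx : Good k x) (hy : Good k y) (h : x < y) :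
    ff k x < ff k y := by
  rw [← (oo_mono (k := k + 1) (by omega)).lt_iff_lt, hx.2, hy.2]
  exact oo_mono hk h

theorem Good.le {k x y : ℕ} (hk : 2 ≤ k) (hx : Good k x) (hy : Good k y) (h : x ≤ y) :
    ff k x ≤ ff k y := by
  rcases h.lt_or_eq with h | rfl
  · exact (hx.lt hk hy h).le
  · exact le_rfl

theorem iter_lem {k a b q N : ℕ} (hk : 2 ≤ k) (IH : ∀ n < Ack k a b, Good k n)
    (hit : ∀ j, j + 1 < N → LP k ((Ack k a)^[j + 1] q) a ((Ack k a)^[j] q))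
    (hq : q ≤ b) (hb : Ack k a b < (Ack k a)^[N] q) :
    Ack (k + 1) (ff k a) (ff k b) < (Ack (k + 1) (ff k a))^[N] (ff k q) := by
  have hl : 2 ≤ k + 1 := by omega
  have hf : ∀ j, j < N → ff k ((Ack k a)^[j] q) = (Ack (k + 1) (ff k a))^[j] (ff k q) := by
    intro j
    induction j with
    | zero => simp
    | succ j ih =>
      intro hj
      have h := hit j hj
      rw [Function.iterate_succ_apply'] at h ⊢
      rw [ff_lead hk h, ih (by omega), Function.iterate_succ_apply']
  have hex : ∃ j, b < (Ack k a)^[j] q := ⟨N, (akk_lt hk a b).trans hb⟩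
  classical
  obtain ⟨j, hj⟩ : ∃ j, Nat.find hex = j + 1 := by
    refine ⟨Nat.find hex - 1, ?_⟩
    have : Nat.find hex ≠ 0 := fun h0 => by
      have h3 := Nat.find_spec hex
      rw [h0] at h3
      simp at h3
      omega
    omega
  have h1 : b < (Ack k a)^[j + 1] q := hj ▸ Nat.find_spec hex
  have h2 : (Ack k a)^[j] q ≤ b := not_lt.1 (Nat.find_min hex (m := j) (by omega))
  have h3 : (Ack k a)^[j + 1] q ≤ Ack k a b := by
    rw [Function.iterate_succ_apply']; exact (akk_sm hk a).monotone h2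
  have hjN : j + 1 < N := by
    by_contra hc
    have := it_le (akk_basic hk a).2 (show N ≤ j + 1 by omega) q
    omega
  rcases h3.lt_or_eq with h3 | h3
  · have h4 := (IH b (akk_lt hk a b)).lt hk (IH _ h3) h1
    rw [hf _ hjN] at h4
    refine lt_of_lt_of_le (akk_sm hl _ h4) ?_
    rw [← Function.iterate_succ_apply' (Ack (k + 1) (ff k a))]
    exact it_le (akk_basic hl _).2 hjN _
  · rw [Function.iterate_succ_apply'] at h3
    have h4 := (akk_sm hk a).injective h3
    rw [← h4, hf _ (by omega), ← Function.iterate_succ_apply' (Ack (k + 1) (ff k a))]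
    exact it_lt (akk_basic hl _).2 hjN _

theorem diff_lem {k d e s x y : ℕ} (hk : 2 ≤ k) (hd : 0 < d)
    (hy : Ack (k + 1) (ff k d) (ff k e) = Ack (k + 1) s y) :
    Ack k d e - x ≤ Ack (k + 1) (ff k d) (ff k e) - y := by
  have hl : 2 ≤ k + 1 := by omega
  have h1 := two_mul_le_akk hl s y
  obtain ⟨d, rfl⟩ : ∃ d', d = d' + 1 := ⟨d - 1, by omega⟩
  have h2 := akk_double hk d e
  have h3 := akk_le hl (ff_ge hk (d + 1)) (ff_ge hk e)
  omega

theorem good_lead {k a b : ℕ} (hk : 2 ≤ k) (IH : ∀ n < Ack k a b, Good k n)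
    (h : LP k (Ack k a b) a b) :
    LP (k + 1) (ff k (Ack k a b)) (ff k a) (ff k b) := by
  have hl : 2 ≤ k + 1 := by omega
  rw [ff_lead hk h]
  refine ⟨?_, Nat.lt_pow_self (by omega)⟩
  have hself := akk_sm hl (ff k a) (Nat.lt_succ_self (ff k b))
  have hw := h.1
  cases hw with
  | base _ _ h1 h2 h3 =>
    refine .base _ _ ?_ le_rfl hself
    rcases Nat.eq_zero_or_pos b with rfl | hb
    · rw [ff_zero]; exact akk_succ_lt hl _ _
    · have hone : ff k 1 = 1 := by
        have : LP k (Ack k 0 0) 0 0 := by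
          refine ⟨.base _ _ (akk_succ_lt hk _ _) le_rfl (akk_sm hk _ (by omega)),
            Nat.lt_pow_self (by omega)⟩
        have h4 := ff_lead hk this
        simpa [akk_zero, ff_zero] using h4
      have e0 : ∀ k a, Ack k (a + 1) 0 = (Ack k a)^[k] 1 := fun k a => by
        rw [akk_it]; simp
      have := iter_lem (q := 1) (N := k) hk IH ?_ hb (by rw [← e0]; exact h1)
      · rw [hone] at this
        rw [e0]
        exact this.trans_le (it_le (akk_basic hl _).2 (by omega) _)
      · intro j hj
        rw [Function.iterate_succ_apply']
        refine ⟨.base _ _ ?_ le_rfl (akk_sm hk _ (Nat.lt_succ_self _)), Nat.lt_pow_self (by omega)⟩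
        rw [e0, ← Function.iterate_succ_apply' (Ack k a)]
        exact it_lt (akk_basic hk _).2 hj _
  | next d e _ _ h0 h1 h2 h3 h4 =>
    have had := h0.idx hk h1
    have hqb := akk_le_arg hk h1 h4
    have hbp := akk_lt hk a b
    have hqp : Ack k d e < Ack k a b := by omega
    have hq := LP.lead hk h0
    have hqf := ff_lead hk hq
    have hW := ((IH _ hqp).1 _ _ hq).1
    have hdp : d < Ack k a b := (akk_gt_idx hk d e).trans hqp
    have hap := akk_gt_idx hk a b
    have had' := (IH _ hap).lt hk (IH _ hdp) had
    have hqb' := (IH _ hqp).le hk (IH _ hbp) hqb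
    rw [hqf] at hW hqb'
    -- the main bounds
    have main : ∀ N, (Ack k a)^[N] (Ack k d e) ≤ Ack k d (e + 1) →
        (Ack k a)^[N] (Ack k d e) ≤ Ack k (a + 1) (Ack k d e) →
        Ack k a b < (Ack k a)^[N] (Ack k d e) →
        Ack (k + 1) (ff k a) (ff k b) <
          (Ack (k + 1) (ff k a))^[N] (Ack (k + 1) (ff k d) (ff k e)) := by
      intro N hN1 hN2 hN3
      rw [← hqf]
      refine iter_lem hk IH ?_ hqb hN3
      intro j hj
      have hlt := it_lt (akk_basic hk a).2 hj (Ack k d e)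
      have hge := it_infl (akk_basic hk a).2 j (Ack k d e)
      have hge' := it_infl (akk_basic hk a).2 (j + 1) (Ack k d e)
      rw [Function.iterate_succ_apply'] at hlt hge' ⊢
      refine ⟨.next d e _ _ (h0.move hk (by omega) (by omega)) ?_ (by omega) le_rfl
        (akk_sm hk _ (Nat.lt_succ_self _)), Nat.lt_pow_self (by omega)⟩
      exact (akk_sm hk a).monotone (by omega)
    have bounds : Ack (k + 1) (ff k a) (ff k b) < Ack (k + 1) (ff k d) (ff k e + 1) ∧
        Ack (k + 1) (ff k a) (ff k b) <
          Ack (k + 1) (ff k a + 1) (Ack (k + 1) (ff k d) (ff k e)) := by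
      obtain ⟨y, hy⟩ := akk_range hl (show ff k a + 1 ≤ ff k d from had') (ff k e)
      have hyq : y < Ack (k + 1) (ff k d) (ff k e) := by rw [hy]; exact akk_lt hl _ _
      have hstep : ∀ n, n ≤ Ack (k + 1) (ff k d) (ff k e) - y →
          (Ack (k + 1) (ff k a))^[(k + 1) * n] (Ack (k + 1) (ff k d) (ff k e)) ≤
          Ack (k + 1) (ff k a + 1) (Ack (k + 1) (ff k d) (ff k e)) := by
        intro n hn
        conv_lhs => rw [hy]
        rw [← akk_step]
        exact (akk_sm hl _).monotone (by omega)
      rcases (show a + 1 ≤ d from had).eq_or_lt with hd | hd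
      · have e1 : (Ack k a)^[k] (Ack k d e) = Ack k d (e + 1) := by
          rw [← hd, akk_step]; simp
        have := main k e1.le (by
          rw [e1, ← hd]; exact (akk_sm hk _).monotone (akk_lt hk _ _)) (by rw [e1]; exact h0.hi)
        have h5 := it_le (akk_basic hl (ff k a)).2 (show k ≤ (k + 1) * 1 by omega)
          (Ack (k + 1) (ff k d) (ff k e))
        refine ⟨this.trans_le (h5.trans ?_), this.trans_le (h5.trans (hstep 1 (by omega)))⟩
        obtain ⟨D, hD⟩ : ∃ D, ff k d = D + 1 := ⟨ff k d - 1, by omega⟩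
        rw [hD, akk_step]
        exact it_mono2 (akk_sm hl _).monotone (akk_idx_le hl (by omega)) _ le_rfl
      · obtain ⟨x, hx⟩ := akk_range hk (show a + 1 ≤ d by omega) e
        have hxq : x < Ack k d e := by rw [hx]; exact akk_lt hk _ _
        have e1 : (Ack k a)^[k * (Ack k d e - x)] (Ack k d e) = Ack k (a + 1) (Ack k d e) := by
          conv_lhs => rw [hx]
          rw [← akk_step, ← hx]
          congr 1; omega
        have := main (k * (Ack k d e - x)) (by rw [e1]; exact akk_comp_le hk hd e) e1.le
          (by rw [e1]; exact h2)
        have hdd := diff_lem (x := x) hk (by omega) hy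
        have h5 := hstep _ hdd
        have h6 := it_le (akk_basic hl (ff k a)).2
          (show k * (Ack k d e - x) ≤ (k + 1) * (Ack k d e - x) from
            Nat.mul_le_mul_right _ (by omega)) (Ack (k + 1) (ff k d) (ff k e))
        have h7 := this.trans_le (h6.trans h5)
        refine ⟨h7.trans_le (akk_comp_le hl ?_ _), h7⟩
        have ha1 : a + 1 < Ack k a b := by omega
        have g1 := (IH _ hap).lt hk (IH _ ha1) (Nat.lt_succ_self a)
        have g2 := (IH _ ha1).lt hk (IH _ hdp) hd
        omega
    refine .next _ _ _ _ (hW.up hl (by have := akk_lt hl (ff k a) (ff k b); omega) bounds.1)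
      ((akk_sm hl _).monotone hqb') bounds.2 le_rfl hself

theorem good_LP {k m a b : ℕ} (hk : 2 ≤ k) (IH : ∀ n < m, Good k n) (h : LP k m a b) :
    LP (k + 1) (ff k m) (ff k a) (ff k b) := by
  have hl : 2 ≤ k + 1 := by omega
  rcases h.1.lo.eq_or_lt with rfl | hpm
  · exact good_lead hk IH h
  have hp := LP.lead hk h.1
  have hpf := ff_lead hk hp
  have hP := (IH _ hpm).1 _ _ hp
  rw [hpf] at hP
  have hp0 : 0 < Ack k a b := hp.pos hk
  have hmul : ∀ j r, j * Ack k a b + r ≤ m → ff k (j * Ack k a b + r) =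
      j * Ack (k + 1) (ff k a) (ff k b) + ff k r := by
    intro j r
    induction j with
    | zero => simp
    | succ j ih =>
      intro hj
      have e : (j + 1) * Ack k a b + r = (j * Ack k a b + r) + Ack k a b := by ring
      rw [e] at hj ⊢
      rw [ff_eq hk (h.move hk (by omega) hj), Nat.add_sub_cancel, ih (by omega)]
      ring
  have hm : m / Ack k a b * Ack k a b + m % Ack k a b = m := Nat.div_add_mod' _ _
  have hr : m % Ack k a b < Ack k a b := Nat.mod_lt _ hp0
  have hfm := hmul _ _ hm.le
  rw [hm] at hfm
  have hrf := (IH _ (hr.trans hpm)).lt hk (IH _ hpm) hr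
  rw [hpf] at hrf
  have hup : ff k m < (m / Ack k a b + 1) * Ack (k + 1) (ff k a) (ff k b) := by
    rw [hfm, add_mul]; omega
  have hlow : Ack (k + 1) (ff k a) (ff k b) ≤ ff k m := by
    rw [ff_eq hk h]; omega
  have key : ff k m < Ack (k + 1) (ff k a) (ff k b + 1) ∧
      ff k m < (k + 1) ^ Ack (k + 1) (ff k a) (ff k b) := by
    rcases Nat.eq_zero_or_pos a with rfl | ha
    · have h1 : ff k m < Ack (k + 1) 0 (ff k b + 1) := by
        refine hup.trans_le ?_
        rw [ff_zero, akk_zero (k + 1), akk_zero (k + 1), pow_succ']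
        apply Nat.mul_le_mul_right
        have h2 := h.1.hi
        rw [akk_zero, pow_succ', ← akk_zero] at h2
        have := Nat.div_lt_of_lt_mul (by rwa [mul_comm] at h2 : m < Ack k 0 b * k)
        omega
      rw [ff_zero]
      refine ⟨h1, h1.trans_le ?_⟩
      rw [← akk_zero (k + 1)]
      exact (akk_sm hl 0).monotone (akk_lt hl _ _)
    · obtain ⟨x, hx⟩ := akk_range hk (Nat.zero_le a) b
      obtain ⟨y, hy⟩ := akk_range hl (Nat.zero_le (ff k a)) (ff k b)
      have hdd := diff_lem (x := x) hk ha hy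
      have hxp : x < Ack k a b := by rw [hx]; exact akk_lt hk _ _
      have hyp : y < Ack (k + 1) (ff k a) (ff k b) := by rw [hy]; exact akk_lt hl _ _
      have h2 := h.2
      have hj : m / Ack k a b < k ^ (Ack k a b - x) := by
        apply Nat.div_lt_of_lt_mul
        have : Ack k a b * k ^ (Ack k a b - x) = k ^ Ack k a b := by
          conv_lhs => rw [hx, akk_zero, ← akk_zero, ← hx]
          nth_rewrite 1 [hx]
          rw [akk_zero, ← pow_add]
          congr 1; omega
        omega
      have h1 : ff k m < (k + 1) ^ Ack (k + 1) (ff k a) (ff k b) := by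
        refine hup.trans_le ?_
        calc (m / Ack k a b + 1) * Ack (k + 1) (ff k a) (ff k b)
            ≤ (k + 1) ^ (Ack k a b - x) * Ack (k + 1) (ff k a) (ff k b) := by
              apply Nat.mul_le_mul_right
              have := Nat.pow_le_pow_left (Nat.le_succ k) (Ack k a b - x)
              simp only [Nat.succ_eq_add_one] at this
              omega
          _ = (k + 1) ^ (Ack k a b - x + y) := by
              rw [pow_add, hy, akk_zero]
          _ ≤ _ := Nat.pow_le_pow_right (by omega) (by omega)
      refine ⟨h1.trans_le ?_, h1⟩
      rw [← akk_zero (k + 1)]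
      exact akk_comp_le hl (ha.trans_le (ff_ge hk a)) _
  exact ⟨hP.1.up hl hlow key.1, key.2⟩

theorem good_all {k : ℕ} (hk : 2 ≤ k) (m : ℕ) : Good k m := by
  induction m using Nat.strong_induction_on with
  | _ m ih =>
  refine ⟨fun a b h => good_LP hk ih h, ?_⟩
  rcases Nat.eq_zero_or_pos m with rfl | hm
  · rw [ff_zero, oo_zero, oo_zero]
  · have h := LP.spec hk hm
    rw [oo_eq (by omega) (good_LP hk ih h), oo_eq hk h, (ih _ (h.a_lt hk)).2, (ih _ (h.b_lt hk)).2]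
    congr 1
    rw [← (ih _ (h.c_lt hk)).2]
    congr 1
    rw [ff_eq hk h]
    omega

theorem stmt_19 : ∀ m : ℕ, ∃ i : ℕ, AckGoodstein m i 0 := by
  intro m
  have H : ∀ (α : Ordinal.{0}) (i v : ℕ), oo (i + 2) v = α → AckGoodstein m i v →
      ∃ j, AckGoodstein m j 0 := by
    intro α
    induction α using WellFoundedLT.induction with
    | _ α ih =>
    intro i v hv hg
    rcases Nat.eq_zero_or_pos v with rfl | hpos
    · exact ⟨i, hg⟩
    · have hk : 2 ≤ i + 2 := by omega
      have hs := AckGoodstein.step i v _ hg hpos (ff_bch hk v)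
      have hge := ff_ge hk v
      refine ih _ ?_ (i + 1) _ rfl hs
      have h1 := oo_mono (k := i + 2 + 1) (by omega)
        (show ff (i + 2) v - 1 < ff (i + 2) v by omega)
      rw [(good_all hk v).2, hv] at h1
      exact h1
  exact H _ 0 m rfl .zero
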